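/- Let α ≥ 0 and let k̄(v,u) = (|v-u| + |v-u|^{-1})·exp(-|v-u|²/8)·exp(-(|v|²-|u|²)²/(8|v-u|²)). Then there exists C_α > 0 such that for all v ∈ ℝ³, ∫_{ℝ³} k̄(v,u)²·(1+|v|²)^α/(1+|u|²)^α du ≤ C_α·(1+|v|)^{-1}. -/

import Mathlib

/-!
With `z = v - u` and `t = ⟪v, z⟫ / ‖z‖` one has `‖v‖² - ‖u‖² = 2 t ‖z‖ - ‖z‖²`, so the two
exponents of `k̄²` form a positive definite quadratic form in `(‖z‖, t)`. Together with Peetre's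
inequality for the weights this bounds the integrand by a radial profile of `z` times
`exp (-t² / 8)`. The latter depends only on the direction of `z`, so in polar coordinates the
integral factors, and replacing the profile by the indicator of the unit ball computes the angular
factor up to a constant. In the unit ball `t² ≥ ⟪v, z⟫²`, and what is left is a Gaussian integral
with variance of order `(1 + ‖v‖²)⁻¹` in the direction of `v`.
-/

open MeasureTheory Measure Module Metric Real Set
open scoped RealInnerProductSpace

section RealInequalities

theorem rpow_le_mul_exp {x p ε : ℝ} (hx : 0 ≤ x) (hp : 0 < p) (hε : 0 < ε) :
    x ^ p ≤ (p / ε) ^ p * exp (ε * x) := by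
  calc
    x ^ p ≤ (p / ε * exp (ε * x / p)) ^ p := by
      gcongr
      rw [← div_le_iff₀' (by positivity), div_div_eq_mul_div, mul_comm x]
      linarith [add_one_le_exp (ε * x / p)]
    _ = (p / ε) ^ p * exp (ε * x) := by
      rw [mul_rpow (by positivity) (exp_pos _).le, ← exp_mul, div_mul_cancel₀ _ hp.ne']

theorem sqrt_pi_div_one_add_sq_le {l : ℝ} (hl : 0 ≤ l) :
    √(π / (1 + 1 / 8 * l ^ 2)) ≤ 4 * √π * (1 + l)⁻¹ := by
  refine sqrt_le_iff.2 ⟨by positivity, ?_⟩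
  calc
    π / (1 + 1 / 8 * l ^ 2) ≤ 16 * π / (1 + l) ^ 2 := by
      rw [div_le_div_iff₀ (by positivity) (by positivity), mul_comm 16 π, mul_assoc]
      gcongr
      nlinarith [sq_nonneg (l - 1)]
    _ = (4 * √π * (1 + l)⁻¹) ^ 2 := by
      rw [mul_pow, mul_pow, sq_sqrt pi_pos.le, inv_pow, div_eq_mul_inv]
      ring

end RealInequalities

section Peetre

variable {E : Type*} [SeminormedAddCommGroup E]

theorem one_add_norm_sq_le_mul (v u : E) :
    1 + ‖v‖ ^ 2 ≤ 2 * (1 + ‖v - u‖ ^ 2) * (1 + ‖u‖ ^ 2) := by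
  have htri : ‖v‖ ^ 2 ≤ (‖v - u‖ + ‖u‖) ^ 2 := by
    gcongr
    exact norm_le_norm_sub_add v u
  nlinarith [sq_nonneg (‖v - u‖ - ‖u‖), mul_nonneg (sq_nonneg ‖v - u‖) (sq_nonneg ‖u‖)]

theorem one_add_norm_sq_rpow_div_le (α : ℝ) (v u : E) :
    (1 + ‖v‖ ^ 2) ^ α / (1 + ‖u‖ ^ 2) ^ α ≤ (2 * (1 + ‖v - u‖ ^ 2)) ^ |α| := by
  rw [← div_rpow (by positivity) (by positivity)]
  rcases le_total 0 α with hα | hα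
  · rw [abs_of_nonneg hα]
    gcongr
    rw [div_le_iff₀ (by positivity)]
    exact one_add_norm_sq_le_mul v u
  · obtain ⟨β, rfl⟩ := neg_surjective α
    rw [abs_neg, abs_of_nonneg (neg_nonpos.1 hα), rpow_neg_eq_inv_rpow, inv_div, norm_sub_rev]
    gcongr
    · exact neg_nonpos.1 hα
    rw [div_le_iff₀ (by positivity)]
    exact one_add_norm_sq_le_mul u v

end Peetre

section PolarCoordinates

variable {E : Type*} [NormedAddCommGroup E] [NormedSpace ℝ E] [FiniteDimensional ℝ E]
  [Nontrivial E] [MeasurableSpace E] [BorelSpace E] (μ : Measure E) [μ.IsAddHaarMeasure]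

theorem integral_volumeIoiPow (n : ℕ) (f : ℝ → ℝ) :
    ∫ r, f r ∂volumeIoiPow n = ∫ r in Ioi (0 : ℝ), r ^ n * f r := by
  simp only [volumeIoiPow, ENNReal.ofReal]
  rw [integral_withDensity_eq_integral_smul (by fun_prop),
    integral_subtype_comap measurableSet_Ioi fun r ↦ (r ^ n).toNNReal • f r]
  refine setIntegral_congr_fun measurableSet_Ioi fun r hr ↦ ?_
  rw [NNReal.smul_def, coe_toNNReal _ (pow_nonneg (le_of_lt hr) _), smul_eq_mul]

theorem integral_norm_mul_eq_toSphere (f : ℝ → ℝ) {g : E → ℝ}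
    (hg : ∀ r : ℝ, 0 < r → ∀ x, g (r • x) = g x) :
    ∫ x, f ‖x‖ * g x ∂μ =
      (∫ ω, g ω ∂μ.toSphere) * ∫ r in Ioi (0 : ℝ), r ^ (finrank ℝ E - 1) * f r := by
  have hdir (x : ({0}ᶜ : Set E)) : g (‖x.1‖⁻¹ • x.1) = g x :=
    hg _ (inv_pos.2 (norm_pos_iff.2 x.2)) _
  calc
    ∫ x, f ‖x‖ * g x ∂μ = ∫ x : ({0}ᶜ : Set E), f ‖x.1‖ * g x ∂μ.comap (↑) := by
      rw [integral_subtype_comap (measurableSet_singleton _).compl fun x ↦ f ‖x‖ * g x,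
        restrict_compl_singleton]
    _ = ∫ p, g p.1 * f p.2 ∂μ.toSphere.prod (volumeIoiPow (finrank ℝ E - 1)) := by
      simpa [hdir, mul_comm] using μ.measurePreserving_homeomorphUnitSphereProd.integral_comp
        (Homeomorph.measurableEmbedding _) fun p ↦ g p.1 * f p.2
    _ = _ := by
      rw [integral_prod_mul (fun ω : sphere (0 : E) 1 ↦ g ω) fun r : Ioi (0 : ℝ) ↦ f r,
        integral_volumeIoiPow]

theorem setIntegral_ball_eq_toSphere {g : E → ℝ} (hg : ∀ r : ℝ, 0 < r → ∀ x, g (r • x) = g x) :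
    ∫ x in ball 0 1, g x ∂μ = (finrank ℝ E : ℝ)⁻¹ * ∫ ω, g ω ∂μ.toSphere := by
  have hradial : ∫ r in Ioi (0 : ℝ), r ^ (finrank ℝ E - 1) * (Iio 1).indicator 1 r =
      (finrank ℝ E : ℝ)⁻¹ := by
    calc
      _ = ∫ r in Ioi (0 : ℝ), (Iio 1).indicator (fun r ↦ r ^ (finrank ℝ E - 1)) r := by
        simp [indicator_apply]
      _ = ∫ r in (0 : ℝ)..1, r ^ (finrank ℝ E - 1) := by
        rw [setIntegral_indicator measurableSet_Iio, Ioi_inter_Iio,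
          intervalIntegral.integral_of_le zero_le_one, integral_Ioc_eq_integral_Ioo]
      _ = _ := by
        simp [integral_pow, Nat.cast_pred (finrank_pos (R := ℝ) (M := E))]
  rw [← hradial, mul_comm, ← integral_norm_mul_eq_toSphere μ _ hg,
    ← integral_indicator measurableSet_ball]
  congr 1 with x
  by_cases hx : ‖x‖ < 1 <;> simp [hx]

theorem integral_norm_mul_eq_setIntegral_ball (f : ℝ → ℝ) {g : E → ℝ}
    (hg : ∀ r : ℝ, 0 < r → ∀ x, g (r • x) = g x) :
    ∫ x, f ‖x‖ * g x ∂μ =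
      (finrank ℝ E * ∫ r in Ioi (0 : ℝ), r ^ (finrank ℝ E - 1) * f r) *
        ∫ x in ball 0 1, g x ∂μ := by
  have hdim : (finrank ℝ E : ℝ) ≠ 0 := Nat.cast_ne_zero.2 finrank_pos.ne'
  rw [integral_norm_mul_eq_toSphere μ f hg, setIntegral_ball_eq_toSphere μ hg]
  field_simp

end PolarCoordinates

section GaussianIntegral

variable {E : Type*} [NormedAddCommGroup E] [InnerProductSpace ℝ E] [FiniteDimensional ℝ E]

theorem exists_orthonormalBasis_eq_norm_smul [Nontrivial E] (v : E) :
    ∃ (s : Finset E) (b : OrthonormalBasis s ℝ E) (i : s), v = ‖v‖ • b i := by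
  obtain ⟨e, he, hv⟩ : ∃ e : E, ‖e‖ = 1 ∧ v = ‖v‖ • e := by
    rcases eq_or_ne v 0 with rfl | hv
    · obtain ⟨e, he⟩ := exists_norm_eq E zero_le_one
      exact ⟨e, he, by simp⟩
    · exact ⟨‖v‖⁻¹ • v, norm_smul_inv_norm hv, by simp [hv]⟩
  obtain ⟨s, b, hes, hb⟩ := Orthonormal.exists_orthonormalBasis_extension
    (𝕜 := ℝ) (v := {e}) (by simp [orthonormal_subsingleton_iff, he])
  exact ⟨s, b, ⟨e, by simpa using hes⟩, by simpa [hb] using hv⟩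

variable [MeasurableSpace E] [BorelSpace E]

theorem integral_exp_neg_sum_mul_inner_sq {ι : Type*} [Fintype ι] (b : OrthonormalBasis ι ℝ E)
    (β : ι → ℝ) : ∫ z, exp (-∑ i, β i * ⟪b i, z⟫ ^ 2) = ∏ i, √(π / β i) := by
  calc
    _ = ∫ z : EuclideanSpace ℝ ι, exp (-∑ i, β i * z i ^ 2) := by
      rw [← b.measurePreserving_repr_symm.integral_comp
        b.repr.symm.toHomeomorph.measurableEmbedding]
      simp [← b.repr_apply_apply]
    _ = ∫ x : ι → ℝ, ∏ i, exp (-β i * x i ^ 2) := by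
      rw [← (PiLp.volume_preserving_toLp ι).integral_comp
        (MeasurableEquiv.toLp 2 _).measurableEmbedding]
      simp [← exp_sum]
    _ = ∏ i, √(π / β i) := by
      rw [integral_fintype_prod_volume_eq_prod fun i (x : ℝ) ↦ exp (-β i * x ^ 2)]
      simp only [integral_gaussian]

theorem integral_exp_neg_norm_sq_add_inner_sq [Nontrivial E] (a c : ℝ) (v : E) :
    ∫ z, exp (-(a * ‖z‖ ^ 2 + c * ⟪v, z⟫ ^ 2)) =
      √(π / (a + c * ‖v‖ ^ 2)) * √(π / a) ^ (finrank ℝ E - 1) := by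
  classical
  obtain ⟨s, b, i₀, hv⟩ := exists_orthonormalBasis_eq_norm_smul v
  let β (i : s) : ℝ := a + (Pi.single i₀ (c * ‖v‖ ^ 2) : s → ℝ) i
  have hform (z : E) : a * ‖z‖ ^ 2 + c * ⟪v, z⟫ ^ 2 = ∑ i, β i * ⟪b i, z⟫ ^ 2 := by
    have hinner : ⟪v, z⟫ = ‖v‖ * ⟪b i₀, z⟫ := by
      conv_lhs => rw [hv, real_inner_smul_left]
    rw [hinner, ← b.sum_sq_inner_right z]
    simp [β, add_mul, Finset.sum_add_distrib, Finset.mul_sum, Pi.single_apply, mul_pow, mul_assoc]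
  have hoff (i : s) (hi : i ∈ Finset.univ.erase i₀) : √(π / β i) = √(π / a) := by
    simp [β, Finset.ne_of_mem_erase hi]
  simp only [hform, integral_exp_neg_sum_mul_inner_sq]
  rw [← Finset.mul_prod_erase _ _ (Finset.mem_univ i₀), Finset.prod_congr rfl hoff,
    Finset.prod_const, Finset.card_erase_of_mem (Finset.mem_univ i₀), Finset.card_univ,
    ← finrank_eq_card_basis b.toBasis]
  simp [β]

end GaussianIntegral

section AngularFactor

variable {E : Type*} [NormedAddCommGroup E] [InnerProductSpace ℝ E]

/-- The Gaussian `exp (-⟪v, ω⟫² / 8)` in the direction `ω = z / ‖z‖` of `z`. It is the part of the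
bound on the squared Grad kernel that decays in `v`. Since `0 / 0 = 0`, its value at `z = 0`
is `1`. -/
noncomputable def angularGaussian (v z : E) : ℝ :=
  exp (-(⟪v, z⟫ / ‖z‖) ^ 2 / 8)

theorem angularGaussian_pos (v z : E) : 0 < angularGaussian v z :=
  exp_pos _

theorem angularGaussian_le_one (v z : E) : angularGaussian v z ≤ 1 :=
  exp_le_one_iff.2 (by rw [neg_div]; exact neg_nonpos.2 (by positivity))

theorem angularGaussian_smul (v : E) (r : ℝ) (hr : 0 < r) (z : E) :
    angularGaussian v (r • z) = angularGaussian v z := by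
  rw [angularGaussian, real_inner_smul_right, norm_smul, norm_of_nonneg hr.le,
    mul_div_mul_left _ _ hr.ne', angularGaussian]

theorem angularGaussian_le_of_norm_le_one (v : E) {z : E} (hz : ‖z‖ ≤ 1) :
    angularGaussian v z ≤ exp 1 * exp (-(1 * ‖z‖ ^ 2 + 1 / 8 * ⟪v, z⟫ ^ 2)) := by
  have hinner : ⟪v, z⟫ ^ 2 ≤ (⟪v, z⟫ / ‖z‖) ^ 2 := by
    rcases eq_or_ne z 0 with rfl | hz0
    · simp
    · rw [div_pow]
      exact le_div_self (sq_nonneg _) (by positivity) (pow_le_one₀ (norm_nonneg z) hz)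
  have hnorm : ‖z‖ ^ 2 ≤ 1 := pow_le_one₀ (norm_nonneg z) hz
  rw [angularGaussian, ← exp_add, exp_le_exp]
  linarith

@[fun_prop]
theorem measurable_angularGaussian [MeasurableSpace E] [OpensMeasurableSpace E] (v : E) :
    Measurable (angularGaussian v) := by
  unfold angularGaussian
  fun_prop

variable [FiniteDimensional ℝ E] [MeasurableSpace E] [BorelSpace E]

theorem setIntegral_ball_angularGaussian_le [Nontrivial E] (v : E) :
    ∫ z in ball 0 1, angularGaussian v z ≤
      4 * exp 1 * √π ^ finrank ℝ E * (1 + ‖v‖)⁻¹ := by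
  let G (z : E) : ℝ := exp 1 * exp (-(1 * ‖z‖ ^ 2 + 1 / 8 * ⟪v, z⟫ ^ 2))
  have hG : ∫ z, G z = exp 1 * (√(π / (1 + 1 / 8 * ‖v‖ ^ 2)) * √π ^ (finrank ℝ E - 1)) := by
    rw [integral_const_mul, integral_exp_neg_norm_sq_add_inner_sq, div_one]
  have hGint : Integrable G := .of_integral_ne_zero (by rw [hG]; positivity)
  calc
    ∫ z in ball 0 1, angularGaussian v z ≤ ∫ z in ball 0 1, G z := by
      refine integral_mono_of_nonneg (.of_forall fun z ↦ (angularGaussian_pos v z).le)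
        hGint.integrableOn ((ae_restrict_iff' measurableSet_ball).2 (.of_forall fun z hz ↦ ?_))
      exact angularGaussian_le_of_norm_le_one v (mem_ball_zero_iff.1 hz).le
    _ ≤ ∫ z, G z := setIntegral_le_integral hGint (.of_forall fun z ↦ by positivity)
    _ ≤ exp 1 * (4 * √π * (1 + ‖v‖)⁻¹ * √π ^ (finrank ℝ E - 1)) := by
      rw [hG]
      gcongr
      exact sqrt_pi_div_one_add_sq_le (norm_nonneg v)
    _ = 4 * exp 1 * √π ^ finrank ℝ E * (1 + ‖v‖)⁻¹ := by
      rw [← pow_sub_one_mul (finrank_pos (R := ℝ) (M := E)).ne' √π]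
      ring

theorem integral_norm_mul_angularGaussian_le [Nontrivial E] {f : ℝ → ℝ} (hf : 0 ≤ f) (v : E) :
    ∫ z, f ‖z‖ * angularGaussian v z ≤
      finrank ℝ E * (∫ r in Ioi (0 : ℝ), r ^ (finrank ℝ E - 1) * f r) *
        (4 * exp 1 * √π ^ finrank ℝ E) * (1 + ‖v‖)⁻¹ := by
  have hradial : 0 ≤ ∫ r in Ioi (0 : ℝ), r ^ (finrank ℝ E - 1) * f r :=
    setIntegral_nonneg measurableSet_Ioi fun r hr ↦ mul_nonneg (pow_nonneg (le_of_lt hr) _) (hf r)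
  rw [integral_norm_mul_eq_setIntegral_ball volume f (angularGaussian_smul v), mul_assoc (_ * _)]
  gcongr
  exact setIntegral_ball_angularGaussian_le v

theorem integrable_norm_mul_angularGaussian [Nontrivial E] {f : ℝ → ℝ}
    (hf : IntegrableOn (fun r ↦ r ^ (finrank ℝ E - 1) * f r) (Ioi 0)) (v : E) :
    Integrable fun z ↦ f ‖z‖ * angularGaussian v z := by
  refine ((integrable_fun_norm_addHaar volume).2 hf).mul_bdd (c := 1)
    (measurable_angularGaussian v).aestronglyMeasurable (.of_forall fun z ↦ ?_)
  rw [norm_of_nonneg (angularGaussian_pos v z).le]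
  exact angularGaussian_le_one v z

end AngularFactor

section GradKernel

/-- Grad's bound `k̄` on the kernel of the linearized Boltzmann collision operator. Since
`0⁻¹ = 0`, it vanishes on the diagonal. -/
noncomputable def gradKernel {E : Type*} [SeminormedAddCommGroup E] (v u : E) : ℝ :=
  (‖v - u‖ + ‖v - u‖⁻¹) * exp (-‖v - u‖ ^ 2 / 8) *
    exp (-(‖v‖ ^ 2 - ‖u‖ ^ 2) ^ 2 / (8 * ‖v - u‖ ^ 2))

/-- The profile `f` in the bound `f ‖v - u‖ * angularGaussian v (v - u)` for the squared Grad
kernel with weights `(1 + ‖v‖ ^ 2) ^ α / (1 + ‖u‖ ^ 2) ^ α`. -/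
noncomputable def gradProfile (α r : ℝ) : ℝ :=
  (r + r⁻¹) ^ 2 * exp (-r ^ 2 / 8) * (2 * (1 + r ^ 2)) ^ |α|

theorem gradProfile_nonneg (α : ℝ) : 0 ≤ gradProfile α := fun r ↦ by
  unfold gradProfile
  positivity

@[fun_prop]
theorem measurable_gradProfile (α : ℝ) : Measurable (gradProfile α) := by
  unfold gradProfile
  fun_prop

@[fun_prop]
theorem measurable_gradKernel {E : Type*} [SeminormedAddCommGroup E] [MeasurableSpace E]
    [BorelSpace E] (v : E) : Measurable (gradKernel v) := by
  unfold gradKernel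
  fun_prop

theorem gradKernel_sq_le {E : Type*} [NormedAddCommGroup E] [InnerProductSpace ℝ E] (v u : E) :
    gradKernel v u ^ 2 ≤ (‖v - u‖ + ‖v - u‖⁻¹) ^ 2 * exp (-‖v - u‖ ^ 2 / 8) *
      angularGaussian v (v - u) := by
  rcases eq_or_ne v u with rfl | hvu
  · simp [gradKernel]
  have hr : ‖v - u‖ ≠ 0 := norm_ne_zero_iff.2 (sub_ne_zero.2 hvu)
  have hu : ‖u‖ ^ 2 = ‖v‖ ^ 2 - 2 * ⟪v, v - u⟫ + ‖v - u‖ ^ 2 := by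
    simpa using norm_sub_sq_real v (v - u)
  rw [gradKernel, angularGaussian, mul_assoc, mul_assoc, mul_pow, ← exp_add, ← exp_add,
    ← exp_nat_mul, hu]
  gcongr
  set r := ‖v - u‖
  set t := ⟪v, v - u⟫ / r with ht
  have hinner : ⟪v, v - u⟫ = t * r := by rw [ht, div_mul_cancel₀ _ hr]
  have hexponent : -(‖v‖ ^ 2 - (‖v‖ ^ 2 - 2 * (t * r) + r ^ 2)) ^ 2 / (8 * r ^ 2) =
      -(2 * t - r) ^ 2 / 8 := by
    field_simp
    ring
  have hform : r ^ 2 / 8 + t ^ 2 / 8 ≤ r ^ 2 / 4 + (2 * t - r) ^ 2 / 4 := by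
    nlinarith [sq_nonneg (7 * t - 4 * r), sq_nonneg r]
  rw [hinner, hexponent]
  push_cast
  linarith

theorem gradKernel_sq_mul_weight_le {E : Type*} [NormedAddCommGroup E] [InnerProductSpace ℝ E]
    (α : ℝ) (v u : E) :
    gradKernel v u ^ 2 * (1 + ‖v‖ ^ 2) ^ α / (1 + ‖u‖ ^ 2) ^ α ≤
      gradProfile α ‖v - u‖ * angularGaussian v (v - u) := by
  have hA := angularGaussian_pos v (v - u)
  calc
    _ = gradKernel v u ^ 2 * ((1 + ‖v‖ ^ 2) ^ α / (1 + ‖u‖ ^ 2) ^ α) := mul_div_assoc _ _ _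
    _ ≤ (‖v - u‖ + ‖v - u‖⁻¹) ^ 2 * exp (-‖v - u‖ ^ 2 / 8) * angularGaussian v (v - u) *
          (2 * (1 + ‖v - u‖ ^ 2)) ^ |α| := by
      gcongr
      · exact gradKernel_sq_le v u
      · exact one_add_norm_sq_rpow_div_le α v u
    _ = gradProfile α ‖v - u‖ * angularGaussian v (v - u) := by
      rw [gradProfile]
      ring

theorem exists_pow_mul_gradProfile_le (α : ℝ) {n : ℕ} (hn : 2 ≤ n) :
    ∃ K, ∀ r, 0 < r → r ^ n * gradProfile α r ≤ K * (r ^ (n - 2) * exp (-(1 / 16) * r ^ 2)) := by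
  have hp : 0 < |α| + 2 := by positivity
  set B : ℝ := ((|α| + 2) / (1 / 32)) ^ (|α| + 2)
  refine ⟨B * exp (1 / 16), fun r hr ↦ ?_⟩
  calc
    r ^ n * gradProfile α r =
        r ^ (n - 2) * exp (-r ^ 2 / 8) * ((2 * (1 + r ^ 2)) ^ |α| * (1 + r ^ 2) ^ 2) := by
      rw [gradProfile, ← Nat.sub_add_cancel hn, pow_add, Nat.add_sub_cancel]
      field_simp
      ring
    _ ≤ r ^ (n - 2) * exp (-r ^ 2 / 8) * (2 * (1 + r ^ 2)) ^ (|α| + 2) := by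
      rw [rpow_add (by positivity), rpow_two]
      gcongr
      linarith [sq_nonneg r]
    _ ≤ r ^ (n - 2) * exp (-r ^ 2 / 8) * (B * exp (1 / 32 * (2 * (1 + r ^ 2)))) := by
      gcongr
      exact rpow_le_mul_exp (by positivity) hp (by norm_num)
    _ = B * exp (1 / 16) * (r ^ (n - 2) * exp (-(1 / 16) * r ^ 2)) := by
      have hexp : exp (-r ^ 2 / 8) * exp (1 / 32 * (2 * (1 + r ^ 2))) =
          exp (1 / 16) * exp (-(1 / 16) * r ^ 2) := by
        rw [← exp_add, ← exp_add]
        ring_nf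
      linear_combination r ^ (n - 2) * B * hexp

theorem integrableOn_pow_mul_gradProfile (α : ℝ) {n : ℕ} (hn : 2 ≤ n) :
    IntegrableOn (fun r ↦ r ^ n * gradProfile α r) (Ioi 0) := by
  obtain ⟨K, hK⟩ := exists_pow_mul_gradProfile_le α hn
  have hgauss : IntegrableOn (fun r : ℝ ↦ r ^ (n - 2) * exp (-(1 / 16) * r ^ 2)) (Ioi 0) := by
    simpa only [rpow_natCast] using
      integrableOn_rpow_mul_exp_neg_mul_sq (b := 1 / 16) (by norm_num)
        (s := (n - 2 : ℕ)) (neg_one_lt_zero.trans_le (Nat.cast_nonneg _))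
  refine (hgauss.const_mul K).mono' (Measurable.aestronglyMeasurable (by fun_prop))
    ((ae_restrict_iff' measurableSet_Ioi).2 (.of_forall fun r (hr : 0 < r) ↦ ?_))
  rw [norm_of_nonneg (mul_nonneg (by positivity) (gradProfile_nonneg α r))]
  exact hK r hr

end GradKernel

theorem grad_kernel_square_estimate_general {E : Type*} [NormedAddCommGroup E]
    [InnerProductSpace ℝ E] [FiniteDimensional ℝ E] [MeasurableSpace E] [BorelSpace E]
    (hE : 3 ≤ finrank ℝ E) (α : ℝ) :
    ∃ C : ℝ, 0 < C ∧ ∀ v : E,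
      Integrable (fun u ↦ gradKernel v u ^ 2 * (1 + ‖v‖ ^ 2) ^ α / (1 + ‖u‖ ^ 2) ^ α) ∧
        ∫ u, gradKernel v u ^ 2 * (1 + ‖v‖ ^ 2) ^ α / (1 + ‖u‖ ^ 2) ^ α ≤ C * (1 + ‖v‖)⁻¹ := by
  have : Nontrivial E := nontrivial_of_finrank_pos (R := ℝ) (by lia)
  obtain ⟨C, hC⟩ : ∃ C, ∀ v : E,
      ∫ z, gradProfile α ‖z‖ * angularGaussian v z ≤ C * (1 + ‖v‖)⁻¹ :=
    ⟨_, integral_norm_mul_angularGaussian_le (gradProfile_nonneg α)⟩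
  refine ⟨max C 1, by positivity, fun v ↦ ?_⟩
  have hbound : Integrable fun u ↦ gradProfile α ‖v - u‖ * angularGaussian v (v - u) :=
    (integrable_norm_mul_angularGaussian
      (integrableOn_pow_mul_gradProfile α (by lia)) v).comp_sub_left v
  have hint : Integrable fun u ↦
      gradKernel v u ^ 2 * (1 + ‖v‖ ^ 2) ^ α / (1 + ‖u‖ ^ 2) ^ α := by
    refine hbound.mono' (Measurable.aestronglyMeasurable (by fun_prop)) (.of_forall fun u ↦ ?_)
    rw [norm_of_nonneg (by positivity)]
    exact gradKernel_sq_mul_weight_le α v u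
  refine ⟨hint, ?_⟩
  calc
    _ ≤ ∫ u, gradProfile α ‖v - u‖ * angularGaussian v (v - u) :=
      integral_mono hint hbound (gradKernel_sq_mul_weight_le α v)
    _ = ∫ z, gradProfile α ‖z‖ * angularGaussian v z :=
      integral_sub_left_eq_self (fun z ↦ gradProfile α ‖z‖ * angularGaussian v z) volume v
    _ ≤ C * (1 + ‖v‖)⁻¹ := hC v
    _ ≤ max C 1 * (1 + ‖v‖)⁻¹ := by
      gcongr
      exact le_max_left C 1

/-- Square-integrability estimate for the weighted Grad kernel:
`∫ k̄(v,u)² (1+|v|²)^α (1+|u|²)^{-α} du ≤ C_α (1+|v|)⁻¹`. -/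
theorem grad_kernel_square_estimate (α : ℝ) (hα : 0 ≤ α) :
    ∃ C : ℝ, 0 < C ∧ ∀ v : EuclideanSpace ℝ (Fin 3),
      (∫ u : EuclideanSpace ℝ (Fin 3),
        ((‖v - u‖ + ‖v - u‖⁻¹) * Real.exp (-‖v - u‖ ^ 2 / 8) *
            Real.exp (-(‖v‖ ^ 2 - ‖u‖ ^ 2) ^ 2 / (8 * ‖v - u‖ ^ 2))) ^ 2 *
          (1 + ‖v‖ ^ 2) ^ α / (1 + ‖u‖ ^ 2) ^ α)
        ≤ C * (1 + ‖v‖)⁻¹ := by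
  obtain ⟨C, hC, h⟩ := grad_kernel_square_estimate_general
    (E := EuclideanSpace ℝ (Fin 3)) (by simp) α
  exact ⟨C, hC, fun v ↦ (h v).2⟩
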